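/- Let G be a group acting on a poset P by order-preserving automorphisms, and suppose for each σ ∈ P we are given a subgroup Δ_σ ≤ G satisfying: (i) Δ_σ ⊆ Δ_τ whenever τ ≤ σ, and (ii) γ Δ_σ γ⁻¹ = Δ_{γ·σ} for all γ ∈ G and σ ∈ P. Then there is a well-defined category CL with objects the elements of P, with Hom(σ,τ) = {γ ∈ G : γ·σ ≤ τ}/Δ_σ (right cosets γΔ_σ), and with composition induced by multiplication of representatives in G; i.e., composition is well defined on cosets, is associative, and the coset of the identity element is an identity morphism. -/

import Mathlib

/-- Well-definedness of the Charney–Lee category `CL`: objects are the elements of the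
poset `P`, morphisms `σ → τ` are right cosets `γΔ_σ` of elements `γ ∈ G` with `γ • σ ≤ τ`,
and composition is induced by multiplication in `G`.  We assert: composition is well
defined on cosets and lands in the correct hom-set, the identity element represents an
identity morphism (unit laws hold), and composition is associative. -/
theorem stmt_1 {G P : Type*} [Group G] [PartialOrder P] [MulAction G P]
    (hmono : ∀ g : G, Monotone (fun x : P => g • x))
    (Δ : P → Subgroup G)
    (hΔ1 : ∀ σ τ : P, τ ≤ σ → Δ σ ≤ Δ τ)
    (hΔ2 : ∀ (g : G) (σ : P) (d : G), d ∈ Δ σ ↔ g * d * g⁻¹ ∈ Δ (g • σ)) :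
    -- composition is well defined on cosets: if `γΔ_σ = γ'Δ_σ` and `δΔ_τ = δ'Δ_τ`, then
    -- the composite `δγ` satisfies `(δγ) • σ ≤ ρ` and `(δγ)Δ_σ = (δ'γ')Δ_σ`
    (∀ (σ τ ρ : P) (γ γ' δ δ' : G), γ • σ ≤ τ → γ' • σ ≤ τ → δ • τ ≤ ρ → δ' • τ ≤ ρ →
      γ⁻¹ * γ' ∈ Δ σ → δ⁻¹ * δ' ∈ Δ τ →
      ((δ * γ) • σ ≤ ρ ∧ (δ * γ)⁻¹ * (δ' * γ') ∈ Δ σ)) ∧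
    -- the identity element of `G` represents an endomorphism of every object
    (∀ σ : P, (1 : G) • σ ≤ σ) ∧
    -- unit laws: composing with the coset of `1` on either side gives back `γΔ_σ`
    (∀ (σ τ : P) (γ : G), γ • σ ≤ τ → ((γ * 1)⁻¹ * γ ∈ Δ σ ∧ (1 * γ)⁻¹ * γ ∈ Δ σ)) ∧
    -- associativity of composition on representatives
    (∀ (σ : P) (γ δ ε : G), ((ε * δ) * γ)⁻¹ * (ε * (δ * γ)) ∈ Δ σ) := by
  refine ⟨?_, fun σ => (one_smul G σ).le, fun σ τ γ _ => ?_, fun σ γ δ ε => ?_⟩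
  · intro σ τ ρ γ γ' δ δ' hγ _ hδ _ hγγ' hδδ'
    refine ⟨?_, ?_⟩
    · rw [mul_smul]
      exact (hmono δ hγ).trans hδ
    · have hconj : γ⁻¹ * (δ⁻¹ * δ') * γ ∈ Δ σ := by
        rw [hΔ2 γ]
        have h := hΔ1 τ (γ • σ) hγ hδδ'
        convert h using 1
        group
      convert (Δ σ).mul_mem hconj hγγ' using 1
      group
  · simp
  · simp [mul_assoc]
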